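/- Let n ≥ 1, q ≥ n+1, b : ℕ × ℕ → ℂ, N ∈ ℂ with N ≠ 0, and G = (x_G, y_G) ∈ ℝ². For l ∈ {1, …, 2n+1} set θ_l = 2π(l−1)/(2n+1), let φ_l be the generalized plane wave with data (G, N, θ_l, q, b), and let e_l(x,y) = exp(N((x−x_G)cos θ_l + (y−y_G)sin θ_l)). Let M_n and M_n^C be the ((n+1)(n+2)/2) × (2n+1) matrices with rows indexed by (k₁,k₂), k₁+k₂ ≤ n, ordered by increasing total order k₁+k₂ (and by increasing k₂ within equal total order), with entries (M_n)_{(k₁,k₂),l} = ∂_x^{k₁}∂_y^{k₂}φ_l(G)/(k₁!k₂!) and (M_n^C)_{(k₁,k₂),l} = ∂_x^{k₁}∂_y^{k₂}e_l(G)/(k₁!k₂!). Then there exists a lower-triangular square matrix L_n (with respect to this row ordering) with all diagonal coefficients equal to 1, whose entries depend only on N, q and b (not on l), such that M_n = L_n · M_n^C; consequently rank M_n = rank M_n^C = 2n+1. -/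

import Mathlib

noncomputable section

/-- Partial derivative of a function `ℝ² → ℂ` with respect to the first variable. -/
def pdx (f : ℝ × ℝ → ℂ) : ℝ × ℝ → ℂ := fun p => fderiv ℝ f p (1, 0)

/-- Partial derivative of a function `ℝ² → ℂ` with respect to the second variable. -/
def pdy (f : ℝ × ℝ → ℂ) : ℝ × ℝ → ℂ := fun p => fderiv ℝ f p (0, 1)

/-- The GPW system: the nonlinear system on the coefficients `lam` arising from matching the
Taylor expansion of `β - P_Δ` at `G` up to order `q`, where `b (i,j) = ∂ₓ^i ∂_y^j β(G)/(i!j!)`. -/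
def gpwSystem (q : ℕ) (b lam : ℕ × ℕ → ℂ) : Prop :=
  ∀ i j : ℕ, i + j + 1 ≤ q →
    b (i, j) =
      (((i + 2) * (i + 1) : ℕ) : ℂ) * lam (i + 2, j)
        + (((j + 2) * (j + 1) : ℕ) : ℂ) * lam (i, j + 2)
        + ∑ k ∈ Finset.range (i + 1), ∑ l ∈ Finset.range (j + 1),
            (((i - k + 1) * (k + 1) : ℕ) : ℂ) * lam (i - k + 1, j - l) * lam (k + 1, l)
        + ∑ k ∈ Finset.range (j + 1), ∑ l ∈ Finset.range (i + 1),
            (((j - k + 1) * (k + 1) : ℕ) : ℂ) * lam (i - l, j - k + 1) * lam (l, k + 1)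

/-- The GPW normalization: `lam (0,0) = 0`, `(lam (1,0), lam (0,1)) = N (cos θ, sin θ)`, and
`lam (i,j) = 0` for `i ∈ {0,1}` and `1 < i + j ≤ q + 1`. -/
def gpwNormalized (q : ℕ) (N : ℂ) (θ : ℝ) (lam : ℕ × ℕ → ℂ) : Prop :=
  lam (0, 0) = 0 ∧ lam (1, 0) = N * Real.cos θ ∧ lam (0, 1) = N * Real.sin θ ∧
    ∀ i j : ℕ, i ≤ 1 → 1 < i + j → i + j ≤ q + 1 → lam (i, j) = 0

/-- The polynomial `P(x,y) = Σ_{0 ≤ i+j ≤ q+1} lam (i,j) (x-x_G)^i (y-y_G)^j`, so that the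
generalized plane wave is `φ = exp P`. -/
def gpwP (q : ℕ) (G : ℝ × ℝ) (lam : ℕ × ℕ → ℂ) (z : ℝ × ℝ) : ℂ :=
  ∑ i ∈ Finset.range (q + 2), ∑ j ∈ Finset.range (q + 2 - i),
    lam (i, j) * ((z.1 - G.1 : ℝ) : ℂ) ^ i * ((z.2 - G.2 : ℝ) : ℂ) ^ j

/-- Row index type: pairs `(k₁, k₂)` of nonnegative integers with `k₁ + k₂ ≤ n`, ordered by
increasing total order `k₁ + k₂` and, within the same total order, by increasing `k₂`. -/
def RowIdx (n : ℕ) := { p : Fin (n + 1) × Fin (n + 1) // (p.1 : ℕ) + (p.2 : ℕ) ≤ n }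

instance (n : ℕ) : Fintype (RowIdx n) := by unfold RowIdx; infer_instance

instance (n : ℕ) : DecidableEq (RowIdx n) := by unfold RowIdx; infer_instance

/-- `r` comes strictly before `r'` in the row ordering (by increasing total order, then by
increasing second index). -/
def RowIdx.lt {n : ℕ} (r r' : RowIdx n) : Prop :=
  (r.1.1 : ℕ) + (r.1.2 : ℕ) < (r'.1.1 : ℕ) + (r'.1.2 : ℕ) ∨
    ((r.1.1 : ℕ) + (r.1.2 : ℕ) = (r'.1.1 : ℕ) + (r'.1.2 : ℕ) ∧ (r.1.2 : ℕ) < (r'.1.2 : ℕ))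

/-- Families of functions that are combinations of `c^a s^b X^i Y^j` with `a + b ≤ d + i + j`. -/
def Vd {ι : Type} (G : ℝ × ℝ) (c s : ι → ℂ) (d : ℤ) : Submodule ℂ (ι → ℝ × ℝ → ℂ) :=
  Submodule.span ℂ {F | ∃ a b i j : ℕ, (a + b : ℤ) ≤ d + i + j ∧
    F = fun l z => c l ^ a * s l ^ b * ((z.1 - G.1 : ℝ) : ℂ) ^ i * ((z.2 - G.2 : ℝ) : ℂ) ^ j}

section helpers
variable {ι : Type} {G : ℝ × ℝ} {c s : ι → ℂ}

lemma Vd_gen {d : ℤ} (a b i j : ℕ) (h : (a + b : ℤ) ≤ d + i + j) :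
    (fun l z => c l ^ a * s l ^ b * ((z.1 - G.1 : ℝ) : ℂ) ^ i * ((z.2 - G.2 : ℝ) : ℂ) ^ j)
      ∈ Vd G c s d :=
  Submodule.subset_span ⟨a, b, i, j, h, rfl⟩

lemma Vd_mono {d e : ℤ} (h : d ≤ e) : Vd G c s d ≤ Vd G c s e := by
  apply Submodule.span_mono
  rintro F ⟨a, b, i, j, h1, rfl⟩
  exact ⟨a, b, i, j, by linarith, rfl⟩

lemma Vd_mul {d e f : ℤ} {A B : ι → ℝ × ℝ → ℂ} (hA : A ∈ Vd G c s d) (hB : B ∈ Vd G c s e)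
    (hf : d + e ≤ f) : A * B ∈ Vd G c s f := by
  refine Vd_mono hf ?_
  have h : A * B ∈ Vd G c s d * Vd G c s e := Submodule.mul_mem_mul hA hB
  unfold Vd at h
  rw [Submodule.span_mul_span] at h
  refine Submodule.span_mono ?_ h
  rintro F ⟨A, ⟨a, b, i, j, h1, rfl⟩, B, ⟨a', b', i', j', h2, rfl⟩, rfl⟩
  refine ⟨a + a', b + b', i + i', j + j', by push_cast; linarith, ?_⟩
  funext l z
  simp only [Pi.mul_apply]
  ring

lemma Vd_const {d : ℤ} (hd : 0 ≤ d) (u : ℂ) : (fun _ _ => u : ι → ℝ × ℝ → ℂ) ∈ Vd G c s d := by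
  have h := (Vd G c s d).smul_mem u (Vd_gen 0 0 0 0 (by simpa using hd))
  convert h using 1
  funext l z
  simp

lemma Vd_c {d : ℤ} (hd : 1 ≤ d) : (fun l _ => c l : ι → ℝ × ℝ → ℂ) ∈ Vd G c s d := by
  have h := (Vd_gen (G := G) (c := c) (s := s) (d := d) 1 0 0 0 (by simpa using hd))
  simpa using h

lemma Vd_s {d : ℤ} (hd : 1 ≤ d) : (fun l _ => s l : ι → ℝ × ℝ → ℂ) ∈ Vd G c s d := by
  have h := (Vd_gen (G := G) (c := c) (s := s) (d := d) 0 1 0 0 (by simpa using hd))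
  simpa using h

lemma hasF_X (G z : ℝ × ℝ) : HasFDerivAt (fun z : ℝ × ℝ => ((z.1 - G.1 : ℝ) : ℂ))
    (Complex.ofRealCLM.comp (ContinuousLinearMap.fst ℝ ℝ ℝ)) z :=
  Complex.ofRealCLM.hasFDerivAt.comp z (hasFDerivAt_fst.sub_const G.1)

lemma hasF_Y (G z : ℝ × ℝ) : HasFDerivAt (fun z : ℝ × ℝ => ((z.2 - G.2 : ℝ) : ℂ))
    (Complex.ofRealCLM.comp (ContinuousLinearMap.snd ℝ ℝ ℝ)) z :=
  Complex.ofRealCLM.hasFDerivAt.comp z (hasFDerivAt_snd.sub_const G.2)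

lemma gen_deriv (G : ℝ × ℝ) (u : ℂ) (i j : ℕ) :
    Differentiable ℝ (fun z : ℝ × ℝ =>
      u * ((z.1 - G.1 : ℝ) : ℂ) ^ i * ((z.2 - G.2 : ℝ) : ℂ) ^ j) ∧
    pdx (fun z : ℝ × ℝ => u * ((z.1 - G.1 : ℝ) : ℂ) ^ i * ((z.2 - G.2 : ℝ) : ℂ) ^ j) =
      (fun z => i * (u * ((z.1 - G.1 : ℝ) : ℂ) ^ (i - 1) * ((z.2 - G.2 : ℝ) : ℂ) ^ j)) ∧
    pdy (fun z : ℝ × ℝ => u * ((z.1 - G.1 : ℝ) : ℂ) ^ i * ((z.2 - G.2 : ℝ) : ℂ) ^ j) =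
      (fun z => j * (u * ((z.1 - G.1 : ℝ) : ℂ) ^ i * ((z.2 - G.2 : ℝ) : ℂ) ^ (j - 1))) := by
  have key := fun z : ℝ × ℝ =>
    (((hasF_X G z).pow i).const_mul u).mul ((hasF_Y G z).pow j)
  have key' : ∀ z, HasFDerivAt (fun z : ℝ × ℝ =>
      u * ((z.1 - G.1 : ℝ) : ℂ) ^ i * ((z.2 - G.2 : ℝ) : ℂ) ^ j) _ z := fun z => key z
  refine ⟨fun z => (key' z).differentiableAt, ?_, ?_⟩
  · funext z
    unfold pdx
    rw [(key' z).fderiv]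
    simp
    ring
  · funext z
    unfold pdy
    rw [(key' z).fderiv]
    simp
    ring

lemma pdx_add {f g : ℝ × ℝ → ℂ} (hf : Differentiable ℝ f) (hg : Differentiable ℝ g) :
    pdx (f + g) = pdx f + pdx g := by
  funext z
  simp [pdx, fderiv_add (hf z) (hg z)]

lemma pdy_add {f g : ℝ × ℝ → ℂ} (hf : Differentiable ℝ f) (hg : Differentiable ℝ g) :
    pdy (f + g) = pdy f + pdy g := by
  funext z
  simp [pdy, fderiv_add (hf z) (hg z)]

lemma pdx_smul {f : ℝ × ℝ → ℂ} (u : ℂ) (hf : Differentiable ℝ f) :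
    pdx (u • f) = u • pdx f := by
  funext z
  simp [pdx, fderiv_const_smul (hf z) u]

lemma pdy_smul {f : ℝ × ℝ → ℂ} (u : ℂ) (hf : Differentiable ℝ f) :
    pdy (u • f) = u • pdy f := by
  funext z
  simp [pdy, fderiv_const_smul (hf z) u]

lemma pdx_mul {f g : ℝ × ℝ → ℂ} (hf : Differentiable ℝ f) (hg : Differentiable ℝ g) :
    pdx (f * g) = pdx f * g + f * pdx g := by
  funext z
  simp [pdx, fderiv_mul (hf z) (hg z)]
  ring

lemma pdy_mul {f g : ℝ × ℝ → ℂ} (hf : Differentiable ℝ f) (hg : Differentiable ℝ g) :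
    pdy (f * g) = pdy f * g + f * pdy g := by
  funext z
  simp [pdy, fderiv_mul (hf z) (hg z)]
  ring

lemma pdx_exp {f : ℝ × ℝ → ℂ} (hf : Differentiable ℝ f) :
    pdx (fun z => Complex.exp (f z)) = pdx f * (fun z => Complex.exp (f z)) := by
  funext z
  simp only [pdx, Pi.mul_apply]
  rw [((hf z).hasFDerivAt.cexp).fderiv]
  simp [mul_comm]

lemma pdy_exp {f : ℝ × ℝ → ℂ} (hf : Differentiable ℝ f) :
    pdy (fun z => Complex.exp (f z)) = pdy f * (fun z => Complex.exp (f z)) := by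
  funext z
  simp only [pdy, Pi.mul_apply]
  rw [((hf z).hasFDerivAt.cexp).fderiv]
  simp [mul_comm]

lemma Vd_diff {d : ℤ} {A : ι → ℝ × ℝ → ℂ} (hA : A ∈ Vd G c s d) :
    (∀ l, Differentiable ℝ (A l)) ∧ (fun l => pdx (A l)) ∈ Vd G c s (d + 1) ∧
      (fun l => pdy (A l)) ∈ Vd G c s (d + 1) := by
  unfold Vd at hA
  induction hA using Submodule.span_induction with
  | mem F h =>
    obtain ⟨a, b, i, j, h, rfl⟩ := h
    refine ⟨fun l => (gen_deriv G _ i j).1, ?_, ?_⟩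
    · simp only [(gen_deriv G _ i j).2.1]
      rcases i with _ | i
      · simp only [Nat.cast_zero, zero_mul]
        exact (Vd G c s (d + 1)).zero_mem
      · refine (Vd G c s (d + 1)).smul_mem ((i + 1 : ℕ) : ℂ) (Vd_gen a b i j ?_)
        push_cast at h
        linarith
    · simp only [(gen_deriv G _ i j).2.2]
      rcases j with _ | j
      · simp only [Nat.cast_zero, zero_mul]
        exact (Vd G c s (d + 1)).zero_mem
      · refine (Vd G c s (d + 1)).smul_mem ((j + 1 : ℕ) : ℂ) (Vd_gen a b i j ?_)
        push_cast at h
        linarith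
  | zero =>
    refine ⟨fun l => differentiable_const 0, ?_, ?_⟩
    · convert (Vd G c s (d + 1)).zero_mem using 1
      funext l z
      simp [pdx]
    · convert (Vd G c s (d + 1)).zero_mem using 1
      funext l z
      simp [pdy]
  | add A B _ _ hA hB =>
    refine ⟨fun l => (hA.1 l).add (hB.1 l), ?_, ?_⟩
    · convert (Vd G c s (d + 1)).add_mem hA.2.1 hB.2.1 using 1
      funext l
      exact pdx_add (hA.1 l) (hB.1 l)
    · convert (Vd G c s (d + 1)).add_mem hA.2.2 hB.2.2 using 1
      funext l
      exact pdy_add (hA.1 l) (hB.1 l)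
  | smul u A _ hA =>
    refine ⟨fun l => (hA.1 l).const_smul u, ?_, ?_⟩
    · convert (Vd G c s (d + 1)).smul_mem u hA.2.1 using 1
      funext l
      exact pdx_smul u (hA.1 l)
    · convert (Vd G c s (d + 1)).smul_mem u hA.2.2 using 1
      funext l
      exact pdy_smul u (hA.1 l)

/-- Evaluation at `G`. -/
lemma Vd_eval {d : ℤ} {A : ι → ℝ × ℝ → ℂ} (hA : A ∈ Vd G c s d) :
    (fun l => A l G) ∈ Submodule.span ℂ
      {u : ι → ℂ | ∃ a b : ℕ, (a + b : ℤ) ≤ d ∧ u = fun l => c l ^ a * s l ^ b} := by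
  unfold Vd at hA
  induction hA using Submodule.span_induction with
  | mem F h =>
    obtain ⟨a, b, i, j, h, rfl⟩ := h
    rcases i with _ | i
    · rcases j with _ | j
      · refine Submodule.subset_span ⟨a, b, by simpa using h, ?_⟩
        simp
      · simp only [sub_self, Complex.ofReal_zero, zero_pow (Nat.succ_ne_zero j), mul_zero]
        exact Submodule.zero_mem _
    · simp only [sub_self, Complex.ofReal_zero, zero_pow (Nat.succ_ne_zero i), mul_zero, zero_mul]
      exact Submodule.zero_mem _
  | zero => exact Submodule.zero_mem _
  | add A B _ _ hA hB => exact Submodule.add_mem _ hA hB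
  | smul u A _ hA => exact Submodule.smul_mem _ u hA

lemma Vd_eval_neg {d : ℤ} (hd : d < 0) {A : ι → ℝ × ℝ → ℂ} (hA : A ∈ Vd G c s d) (l : ι) :
    A l G = 0 := by
  have h := Vd_eval hA
  have he : {u : ι → ℂ | ∃ a b : ℕ, (a + b : ℤ) ≤ d ∧ u = fun l => c l ^ a * s l ^ b} = ∅ := by
    ext u
    simp only [Set.mem_ofPred_eq, Set.mem_empty_iff_false, iff_false]
    rintro ⟨a, b, h, _⟩
    omega
  rw [he, Submodule.span_empty, Submodule.mem_bot] at h
  exact congrFun h l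

/-- The linear phase. -/
def lin (G : ℝ × ℝ) (c s : ℂ) (z : ℝ × ℝ) : ℂ :=
  c * ((z.1 - G.1 : ℝ) : ℂ) + s * ((z.2 - G.2 : ℝ) : ℂ)

lemma lin_deriv (G : ℝ × ℝ) (c s : ℂ) : Differentiable ℝ (lin G c s) ∧
    pdx (lin G c s) = (fun _ => c) ∧ pdy (lin G c s) = (fun _ => s) := by
  have key := fun z : ℝ × ℝ => ((hasF_X G z).const_mul c).add ((hasF_Y G z).const_mul s)
  have key' : ∀ z, HasFDerivAt (lin G c s) _ z := fun z => key z
  refine ⟨fun z => (key' z).differentiableAt, ?_, ?_⟩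
  · funext z
    unfold pdx
    rw [(key' z).fderiv]
    simp
  · funext z
    unfold pdy
    rw [(key' z).fderiv]
    simp

lemma lin_iter (G : ℝ × ℝ) (c s : ℂ) (k₁ k₂ : ℕ) :
    pdx^[k₁] (pdy^[k₂] (fun z => Complex.exp (lin G c s z))) =
      (c ^ k₁ * s ^ k₂) • (fun z => Complex.exp (lin G c s z)) := by
  obtain ⟨hd, hx, hy⟩ := lin_deriv G c s
  have he : Differentiable ℝ (fun z => Complex.exp (lin G c s z)) := fun z => (hd z).cexp
  have h2 : pdy^[k₂] (fun z => Complex.exp (lin G c s z)) =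
      (s ^ k₂) • (fun z => Complex.exp (lin G c s z)) := by
    induction k₂ with
    | zero => simp
    | succ k ih =>
      rw [Function.iterate_succ_apply', ih, pdy_smul _ he, pdy_exp hd, hy]
      funext z
      simp
      ring
  rw [h2]
  induction k₁ with
  | zero => simp
  | succ k ih =>
    rw [Function.iterate_succ_apply', ih, pdx_smul _ he, pdx_exp hd, hx]
    funext z
    simp
    ring

/-- Invariant for derivatives of `exp (lin + R)`. -/
def DInv (G : ℝ × ℝ) (c s : ι → ℂ) (P F : ι → ℝ × ℝ → ℂ) (k₁ k₂ : ℕ) : Prop :=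
  ∃ A : ι → ℝ × ℝ → ℂ, (∀ l, F l = A l * (fun z => Complex.exp (P l z))) ∧
    A - (fun l _ => c l ^ k₁ * s l ^ k₂) ∈ Vd G c s ((k₁ : ℤ) + k₂ - 2)

lemma Vd_mon (k₁ k₂ : ℕ) {d : ℤ} (h : (k₁ + k₂ : ℤ) ≤ d) :
    (fun l _ => c l ^ k₁ * s l ^ k₂ : ι → ℝ × ℝ → ℂ) ∈ Vd G c s d := by
  simpa using (Vd_gen (G := G) (c := c) (s := s) (d := d) k₁ k₂ 0 0 (by simpa using h))

lemma Inv_x {P F R : ι → ℝ × ℝ → ℂ} (hR : R ∈ Vd G c s (-2))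
    (hP : ∀ l, P l = lin G (c l) (s l) + R l) {k₁ k₂ : ℕ} (h : DInv G c s P F k₁ k₂) :
    DInv G c s P (fun l => pdx (F l)) (k₁ + 1) k₂ := by
  obtain ⟨A, hF, hA⟩ := h
  have hPd : ∀ l, Differentiable ℝ (P l) := fun l => by
    rw [hP]; exact (lin_deriv _ _ _).1.add ((Vd_diff hR).1 l)
  have hm := Vd_mon (G := G) (c := c) (s := s) k₁ k₂ (le_refl _)
  have hA' : A ∈ Vd G c s ((k₁ : ℤ) + k₂) := by
    have := (Vd G c s ((k₁ : ℤ) + k₂)).add_mem (Vd_mono (by linarith) hA) hm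
    simpa using this
  have hAd := (Vd_diff hA').1
  obtain ⟨hBd, hBx, -⟩ := Vd_diff hA
  obtain ⟨hRd, hRx, -⟩ := Vd_diff hR
  have hpA : ∀ l, pdx (A l) = pdx ((A - (fun l _ => c l ^ k₁ * s l ^ k₂ : ι → ℝ × ℝ → ℂ)) l) := by
    intro l
    funext z
    simp only [pdx, Pi.sub_apply]
    have : A l - (fun _ => c l ^ k₁ * s l ^ k₂) = fun z => A l z - c l ^ k₁ * s l ^ k₂ := rfl
    rw [this, fderiv_sub_const]
  refine ⟨fun l => pdx (A l) + A l * pdx (P l), ?_, ?_⟩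
  · intro l
    simp only []
    rw [hF, pdx_mul (hAd l) (fun z => (hPd l z).cexp), pdx_exp (hPd l)]
    ring
  · have e : (fun l => pdx (A l) + A l * pdx (P l)) -
        (fun l _ => c l ^ (k₁ + 1) * s l ^ k₂ : ι → ℝ × ℝ → ℂ) =
        (fun l => pdx ((A - (fun l _ => c l ^ k₁ * s l ^ k₂ : ι → ℝ × ℝ → ℂ)) l))
        + (A - (fun l _ => c l ^ k₁ * s l ^ k₂ : ι → ℝ × ℝ → ℂ)) * (fun l _ => c l)
        + A * (fun l => pdx (R l)) := by
      funext l z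
      simp only [Pi.add_apply, Pi.sub_apply, Pi.mul_apply]
      rw [hpA l, hP l, pdx_add (lin_deriv _ _ _).1 (hRd l), (lin_deriv _ _ _).2.1]
      simp only [Pi.add_apply, Pi.sub_apply]
      ring
    rw [e]
    refine Submodule.add_mem _ (Submodule.add_mem _ (Vd_mono ?_ hBx)
      (Vd_mul hA (Vd_c le_rfl) ?_)) (Vd_mul hA' hRx ?_) <;> push_cast <;> linarith

lemma Inv_y {P F R : ι → ℝ × ℝ → ℂ} (hR : R ∈ Vd G c s (-2))
    (hP : ∀ l, P l = lin G (c l) (s l) + R l) {k₁ k₂ : ℕ} (h : DInv G c s P F k₁ k₂) :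
    DInv G c s P (fun l => pdy (F l)) k₁ (k₂ + 1) := by
  obtain ⟨A, hF, hA⟩ := h
  have hPd : ∀ l, Differentiable ℝ (P l) := fun l => by
    rw [hP]; exact (lin_deriv _ _ _).1.add ((Vd_diff hR).1 l)
  have hm := Vd_mon (G := G) (c := c) (s := s) k₁ k₂ (le_refl _)
  have hA' : A ∈ Vd G c s ((k₁ : ℤ) + k₂) := by
    have := (Vd G c s ((k₁ : ℤ) + k₂)).add_mem (Vd_mono (by linarith) hA) hm
    simpa using this
  have hAd := (Vd_diff hA').1
  obtain ⟨hBd, -, hBx⟩ := Vd_diff hA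
  obtain ⟨hRd, -, hRx⟩ := Vd_diff hR
  have hpA : ∀ l, pdy (A l) = pdy ((A - (fun l _ => c l ^ k₁ * s l ^ k₂ : ι → ℝ × ℝ → ℂ)) l) := by
    intro l
    funext z
    simp only [pdy, Pi.sub_apply]
    have : A l - (fun _ => c l ^ k₁ * s l ^ k₂) = fun z => A l z - c l ^ k₁ * s l ^ k₂ := rfl
    rw [this, fderiv_sub_const]
  refine ⟨fun l => pdy (A l) + A l * pdy (P l), ?_, ?_⟩
  · intro l
    simp only []
    rw [hF, pdy_mul (hAd l) (fun z => (hPd l z).cexp), pdy_exp (hPd l)]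
    ring
  · have e : (fun l => pdy (A l) + A l * pdy (P l)) -
        (fun l _ => c l ^ k₁ * s l ^ (k₂ + 1) : ι → ℝ × ℝ → ℂ) =
        (fun l => pdy ((A - (fun l _ => c l ^ k₁ * s l ^ k₂ : ι → ℝ × ℝ → ℂ)) l))
        + (A - (fun l _ => c l ^ k₁ * s l ^ k₂ : ι → ℝ × ℝ → ℂ)) * (fun l _ => s l)
        + A * (fun l => pdy (R l)) := by
      funext l z
      simp only [Pi.add_apply, Pi.sub_apply, Pi.mul_apply]
      rw [hpA l, hP l, pdy_add (lin_deriv _ _ _).1 (hRd l), (lin_deriv _ _ _).2.2]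
      simp only [Pi.add_apply, Pi.sub_apply]
      ring
    rw [e]
    refine Submodule.add_mem _ (Submodule.add_mem _ (Vd_mono ?_ hBx)
      (Vd_mul hA (Vd_s le_rfl) ?_)) (Vd_mul hA' hRx ?_) <;> push_cast <;> linarith

lemma Inv_iter {P R : ι → ℝ × ℝ → ℂ} (hR : R ∈ Vd G c s (-2))
    (hP : ∀ l, P l = lin G (c l) (s l) + R l) (k₁ k₂ : ℕ) :
    DInv G c s P (fun l => pdx^[k₁] (pdy^[k₂] (fun z => Complex.exp (P l z)))) k₁ k₂ := by
  induction k₁ with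
  | zero =>
    induction k₂ with
    | zero =>
      refine ⟨fun _ _ => 1, ?_, ?_⟩
      · intro l
        funext z
        simp
      · convert Submodule.zero_mem _ using 1
        funext l z
        simp
    | succ k ih =>
      have := Inv_y hR hP ih
      simpa only [Function.iterate_succ_apply', Function.iterate_zero, id] using this
  | succ k ih =>
    have := Inv_x hR hP ih
    simpa only [Function.iterate_succ_apply'] using this

/-- The coefficients of order at least two are combinations of low degree monomials. -/
lemma lam_mem {q : ℕ} {b : ℕ × ℕ → ℂ} {K : ℂ} {lam : ι → ℕ × ℕ → ℂ}
    (hsys : ∀ l, gpwSystem q b (lam l))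
    (hc : ∀ l, lam l (1, 0) = c l) (hs : ∀ l, lam l (0, 1) = s l)
    (hK : ∀ l, c l * c l + s l * s l = K)
    (h0 : ∀ l, ∀ i j : ℕ, i ≤ 1 → 1 < i + j → i + j ≤ q + 1 → lam l (i, j) = 0) :
    ∀ m i j : ℕ, i + j = m → 2 ≤ m → m ≤ q + 1 →
      (fun l _ => lam l (i, j) : ι → ℝ × ℝ → ℂ) ∈ Vd G c s ((m : ℤ) - 2) := by
  intro m
  induction m using Nat.strong_induction_on with
  | _ m ihm =>
  intro i
  induction i using Nat.strong_induction_on with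
  | _ i ihi =>
  intro j hij hm hmq
  by_cases hi : i ≤ 1
  · convert Submodule.zero_mem _ using 1
    funext l z
    simpa using h0 l i j hi (by omega) (by omega)
  obtain ⟨i, rfl⟩ : ∃ i', i = i' + 2 := ⟨i - 2, by omega⟩
  have hprev := ihi i (by omega) (j + 2) (by omega) hm hmq
  -- products
  have hprod : 3 ≤ m → ∀ i₁ j₁ i₂ j₂ : ℕ, i₁ + j₁ + i₂ + j₂ = m → 1 ≤ i₁ + j₁ → 1 ≤ i₂ + j₂ →
      (fun l _ => lam l (i₁, j₁) * lam l (i₂, j₂) : ι → ℝ × ℝ → ℂ) ∈ Vd G c s ((m : ℤ) - 2) := by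
    intro h3 i₁ j₁ i₂ j₂ hsum h1 h2
    have order1 : ∀ i j : ℕ, i + j = 1 →
        (fun l _ => lam l (i, j) : ι → ℝ × ℝ → ℂ) ∈ Vd G c s 1 := by
      intro i j h
      rcases i with _ | i
      · obtain rfl : j = 1 := by omega
        simp only [hs]
        exact Vd_s le_rfl
      · obtain rfl : i = 0 := by omega
        obtain rfl : j = 0 := by omega
        simp only [zero_add, hc]
        exact Vd_c le_rfl
    by_cases e1 : i₁ + j₁ = 1
    · exact Vd_mul (order1 _ _ e1) (ihm (i₂ + j₂) (by omega) i₂ j₂ rfl (by omega) (by omega))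
        (by push_cast; omega)
    · by_cases e2 : i₂ + j₂ = 1
      · exact Vd_mul (ihm (i₁ + j₁) (by omega) i₁ j₁ rfl (by omega) (by omega)) (order1 _ _ e2)
          (by push_cast; omega)
      · exact Vd_mul (ihm (i₁ + j₁) (by omega) i₁ j₁ rfl (by omega) (by omega))
          (ihm (i₂ + j₂) (by omega) i₂ j₂ rfl (by omega) (by omega)) (by push_cast; omega)
  have hquad : (fun l _ => ∑ k ∈ Finset.range (i + 1), ∑ l' ∈ Finset.range (j + 1),
            (((i - k + 1) * (k + 1) : ℕ) : ℂ) * lam l (i - k + 1, j - l') * lam l (k + 1, l')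
        + ∑ k ∈ Finset.range (j + 1), ∑ l' ∈ Finset.range (i + 1),
            (((j - k + 1) * (k + 1) : ℕ) : ℂ) * lam l (i - l', j - k + 1) * lam l (l', k + 1) :
      ι → ℝ × ℝ → ℂ) ∈ Vd G c s ((m : ℤ) - 2) := by
    by_cases h3 : 3 ≤ m
    · refine Submodule.add_mem _ (x := fun l _ => _) (y := fun l _ => _) ?_ ?_
      · convert Submodule.sum_mem (Vd G c s ((m : ℤ) - 2)) (t := Finset.range (i + 1))
          (f := fun k => ∑ l' ∈ Finset.range (j + 1), (((i - k + 1) * (k + 1) : ℕ) : ℂ) •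
            (fun l _ => lam l (i - k + 1, j - l') * lam l (k + 1, l') : ι → ℝ × ℝ → ℂ)) ?_ using 1
        · funext l z
          simp [Finset.sum_apply, mul_assoc]
        · intro k hk
          refine Submodule.sum_mem _ fun l' hl' => Submodule.smul_mem _ _ (hprod h3 _ _ _ _ ?_ ?_ ?_)
          all_goals simp only [Finset.mem_range] at hk hl'; omega
      · convert Submodule.sum_mem (Vd G c s ((m : ℤ) - 2)) (t := Finset.range (j + 1))
          (f := fun k => ∑ l' ∈ Finset.range (i + 1), (((j - k + 1) * (k + 1) : ℕ) : ℂ) •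
            (fun l _ => lam l (i - l', j - k + 1) * lam l (l', k + 1) : ι → ℝ × ℝ → ℂ)) ?_ using 1
        · funext l z
          simp [Finset.sum_apply, mul_assoc]
        · intro k hk
          refine Submodule.sum_mem _ fun l' hl' => Submodule.smul_mem _ _ (hprod h3 _ _ _ _ ?_ ?_ ?_)
          all_goals simp only [Finset.mem_range] at hk hl'; omega
    · obtain rfl : i = 0 := by omega
      obtain rfl : j = 0 := by omega
      convert Vd_const (G := G) (c := c) (s := s) (d := (m : ℤ) - 2) (by omega) K using 1
      funext l z
      simp [hc, hs, hK]
  have hb := Vd_const (G := G) (c := c) (s := s) (d := (m : ℤ) - 2) (by omega) (b (i, j))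
  have hfin := Submodule.smul_mem _ ((((i + 2) * (i + 1) : ℕ) : ℂ)⁻¹)
    (Submodule.sub_mem _ (Submodule.sub_mem _ hb
      (Submodule.smul_mem _ (((j + 2) * (j + 1) : ℕ) : ℂ) hprev)) hquad)
  convert hfin using 1
  funext l z
  have h := hsys l i j (by omega)
  have hne : (((i + 2) * (i + 1) : ℕ) : ℂ) ≠ 0 := by
    exact_mod_cast (by positivity : (i + 2) * (i + 1) ≠ 0)
  simp only [Pi.smul_apply, Pi.sub_apply, smul_eq_mul]
  rw [eq_inv_mul_iff_mul_eq₀ hne, h]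
  ring

lemma gpwP_split {q : ℕ} (hq : 1 ≤ q) {lam : ι → ℕ × ℕ → ℂ}
    (h00 : ∀ l, lam l (0, 0) = 0)
    (hc : ∀ l, lam l (1, 0) = c l) (hs : ∀ l, lam l (0, 1) = s l)
    (hmem : ∀ m i j : ℕ, i + j = m → 2 ≤ m → m ≤ q + 1 →
      (fun l _ => lam l (i, j) : ι → ℝ × ℝ → ℂ) ∈ Vd G c s ((m : ℤ) - 2)) :
    ∃ R ∈ Vd G c s (-2), ∀ l, gpwP q G (lam l) = lin G (c l) (s l) + R l := by
  let R : ι → ℝ × ℝ → ℂ := ∑ i ∈ Finset.range (q + 2), ∑ j ∈ Finset.range (q + 2 - i),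
    if 2 ≤ i + j then (fun l z => lam l (i, j) * ((z.1 - G.1 : ℝ) : ℂ) ^ i *
      ((z.2 - G.2 : ℝ) : ℂ) ^ j) else 0
  refine ⟨R, ?_, ?_⟩
  · refine Submodule.sum_mem _ fun i hi => Submodule.sum_mem _ fun j hj => ?_
    simp only [Finset.mem_range] at hi hj
    split_ifs with h
    · convert Vd_mul (f := -2) (hmem (i + j) i j rfl h (by omega))
        (Vd_gen (d := -(i : ℤ) - j) 0 0 i j (by push_cast; linarith)) (by push_cast; linarith) using 1
      funext l z
      simp
      ring
    · exact Submodule.zero_mem _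
  · intro l
    funext z
    have e : ∀ i j : ℕ, lam l (i, j) * ((z.1 - G.1 : ℝ) : ℂ) ^ i * ((z.2 - G.2 : ℝ) : ℂ) ^ j =
        (if i = 1 then (if j = 0 then c l * ((z.1 - G.1 : ℝ) : ℂ) else 0) else 0)
        + (if i = 0 then (if j = 1 then s l * ((z.2 - G.2 : ℝ) : ℂ) else 0) else 0)
        + (if 2 ≤ i + j then (fun l z => lam l (i, j) * ((z.1 - G.1 : ℝ) : ℂ) ^ i *
      ((z.2 - G.2 : ℝ) : ℂ) ^ j : ι → ℝ × ℝ → ℂ) else 0) l z := by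
      intro i j
      by_cases h : 2 ≤ i + j
      · have h1 : ¬ (i = 1 ∧ j = 0) := by omega
        have h2 : ¬ (i = 0 ∧ j = 1) := by omega
        rw [← ite_and, ← ite_and, if_neg h1, if_neg h2, if_pos h]
        simp
      · have : (i = 0 ∧ j = 0) ∨ (i = 1 ∧ j = 0) ∨ (i = 0 ∧ j = 1) := by omega
        rcases this with ⟨rfl, rfl⟩ | ⟨rfl, rfl⟩ | ⟨rfl, rfl⟩ <;> simp [h00, hc, hs]
    unfold gpwP
    simp only [e, Finset.sum_add_distrib, Pi.add_apply, R, Finset.sum_apply]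
    congr 1
    unfold lin
    congr 1
    · rw [Finset.sum_eq_single 1]
      · rw [Finset.sum_eq_single 0]
        · simp
        · intro j _ hj; simp [hj]
        · intro h; simp at h
      · intro i _ hi; simp [hi]
      · intro h; simp at h
    · rw [Finset.sum_eq_single 0]
      · rw [Finset.sum_eq_single 1]
        · simp
        · intro j _ hj; simp [hj]
        · intro h; simp at h
      · intro i _ hi; simp [hi]
      · intro h; simp at h

end helpers

/-- Vanishing of all low-order moments forces the weights to vanish. -/
lemma moments_zero (n : ℕ) (N : ℂ) (hN : N ≠ 0) (v : Fin (2 * n + 1) → ℂ)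
    (h : ∀ a b : ℕ, a + b ≤ n → ∑ l : Fin (2 * n + 1), v l *
      ((N * (Real.cos (2 * Real.pi * (l : ℕ) / (2 * n + 1)) : ℝ)) ^ a *
       (N * (Real.sin (2 * Real.pi * (l : ℕ) / (2 * n + 1)) : ℝ)) ^ b) = 0) : v = 0 := by
  set θ : Fin (2 * n + 1) → ℝ := fun l => 2 * Real.pi * (l : ℕ) / (2 * n + 1) with hθ
  have h1 : ∀ (ε : ℂ) (m : ℕ), m ≤ n → ∑ l, v l *
      ((Real.cos (θ l) : ℂ) + ε * (Real.sin (θ l) : ℂ)) ^ m = 0 := by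
    intro ε m hm
    have h2 : ∑ l, v l * ((N * (Real.cos (θ l) : ℂ)) + ε * (N * (Real.sin (θ l) : ℂ))) ^ m = 0 := by
      simp only [add_pow, Finset.mul_sum]
      rw [Finset.sum_comm]
      refine Finset.sum_eq_zero fun k hk => ?_
      have hk' : k ≤ m := by simpa [Nat.lt_succ_iff] using hk
      have := h k (m - k) (by omega)
      calc _ = (ε ^ (m - k) * (m.choose k)) * ∑ l, v l * ((N * (Real.cos (θ l) : ℂ)) ^ k *
            (N * (Real.sin (θ l) : ℂ)) ^ (m - k)) := by
            rw [Finset.mul_sum]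
            refine Finset.sum_congr rfl fun l _ => ?_
            rw [mul_pow ε]
            ring
        _ = 0 := by rw [this, mul_zero]
    have h3 : N ^ m * ∑ l, v l * ((Real.cos (θ l) : ℂ) + ε * (Real.sin (θ l) : ℂ)) ^ m = 0 := by
      rw [← h2, Finset.mul_sum]
      refine Finset.sum_congr rfl fun l _ => ?_
      rw [show N * (Real.cos (θ l) : ℂ) + ε * (N * (Real.sin (θ l) : ℂ)) =
        N * ((Real.cos (θ l) : ℂ) + ε * (Real.sin (θ l) : ℂ)) by ring, mul_pow]
      ring
    exact (mul_eq_zero.mp h3).resolve_left (pow_ne_zero _ hN)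
  let ζ : Fin (2 * n + 1) → ℂ := fun l => Complex.exp ((θ l : ℂ) * Complex.I)
  have hζ0 : ∀ l, ζ l ≠ 0 := fun l => Complex.exp_ne_zero _
  have hζ : ∀ l, (Real.cos (θ l) : ℂ) + Complex.I * (Real.sin (θ l) : ℂ) = ζ l := by
    intro l
    simp only [ζ, Complex.exp_mul_I, Complex.ofReal_cos, Complex.ofReal_sin]
    ring
  have hζ' : ∀ l, (Real.cos (θ l) : ℂ) + (-Complex.I) * (Real.sin (θ l) : ℂ) = (ζ l)⁻¹ := by
    intro l
    simp only [ζ]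
    rw [← Complex.exp_neg, ← neg_mul, Complex.exp_mul_I, Complex.ofReal_cos,
      Complex.ofReal_sin, Complex.cos_neg, Complex.sin_neg]
    ring
  have hinj : Function.Injective ζ := by
    have hp := Complex.isPrimitiveRoot_exp (2 * n + 1) (by omega)
    have e : ∀ l, ζ l = Complex.exp (2 * Real.pi * Complex.I / ((2 * n + 1 : ℕ) : ℂ)) ^ (l : ℕ) := by
      intro l
      rw [← Complex.exp_nat_mul]
      simp only [ζ, hθ]
      congr 1
      push_cast
      ring
    intro l l' hll
    rw [e, e] at hll
    exact Fin.ext (hp.pow_inj l.2 l'.2 hll)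
  have hw : (fun l => v l * (ζ l ^ n)⁻¹) = 0 := by
    apply Matrix.eq_zero_of_forall_pow_sum_mul_pow_eq_zero hinj
    intro p
    by_cases hp : n ≤ (p : ℕ)
    · rw [← h1 Complex.I ((p : ℕ) - n) (by omega)]
      refine Finset.sum_congr rfl fun l _ => ?_
      rw [hζ, pow_sub₀ _ (hζ0 l) hp]
      ring
    · rw [← h1 (-Complex.I) (n - (p : ℕ)) (by omega)]
      refine Finset.sum_congr rfl fun l _ => ?_
      rw [hζ', inv_pow, pow_sub₀ _ (hζ0 l) (by omega), mul_inv, inv_inv]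
      ring
  funext l
  have := congrFun hw l
  simpa [hζ0 l] using this

lemma rank_of_inj {m k : Type*} [Fintype m] [Fintype k] [DecidableEq k] (M : Matrix m k ℂ)
    (h : ∀ v, M.mulVec v = 0 → v = 0) : M.rank = Fintype.card k := by
  have h2 : Function.Injective M.mulVecLin := by
    rw [← LinearMap.ker_eq_bot, LinearMap.ker_eq_bot']
    exact h
  rw [Matrix.rank, LinearMap.finrank_range_of_inj h2, Module.finrank_fintype_fun_eq_card]

/-- There is a lower-triangular matrix `L_n` with unit diagonal such that `M_n = L_n ⬝ M_n^C`,
where `M_n` (resp. `M_n^C`) is the matrix of normalized Taylor coefficients at `G` of the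
generalized plane waves `φ_l` (resp. of the classical plane waves `e_l`) with equi-spaced
directions `θ_l = 2π(l-1)/(2n+1)`; consequently both matrices have full rank `2n + 1`. -/
theorem Mn_eq_Ln_mul_MnC (n q : ℕ) (hn : 1 ≤ n) (hq : n + 1 ≤ q) (b : ℕ × ℕ → ℂ)
    (N : ℂ) (hN : N ≠ 0) (G : ℝ × ℝ)
    (lam : Fin (2 * n + 1) → ℕ × ℕ → ℂ)
    (hlam : ∀ l : Fin (2 * n + 1), gpwSystem q b (lam l) ∧
      gpwNormalized q N (2 * Real.pi * (l : ℕ) / (2 * n + 1)) (lam l))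
    (Mn MnC : Matrix (RowIdx n) (Fin (2 * n + 1)) ℂ)
    (hMn : ∀ (r : RowIdx n) (l : Fin (2 * n + 1)),
      Mn r l =
        pdx^[(r.1.1 : ℕ)] (pdy^[(r.1.2 : ℕ)]
            (fun z => Complex.exp (gpwP q G (lam l) z))) G /
          ((((r.1.1 : ℕ).factorial * (r.1.2 : ℕ).factorial : ℕ)) : ℂ))
    (hMnC : ∀ (r : RowIdx n) (l : Fin (2 * n + 1)),
      MnC r l =
        pdx^[(r.1.1 : ℕ)] (pdy^[(r.1.2 : ℕ)]
            (fun z => Complex.exp (N *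
              (((z.1 - G.1 : ℝ) : ℂ) *
                  ((Real.cos (2 * Real.pi * (l : ℕ) / (2 * n + 1)) : ℝ) : ℂ)
                + ((z.2 - G.2 : ℝ) : ℂ) *
                  ((Real.sin (2 * Real.pi * (l : ℕ) / (2 * n + 1)) : ℝ) : ℂ))))) G /
          ((((r.1.1 : ℕ).factorial * (r.1.2 : ℕ).factorial : ℕ)) : ℂ)) :
    ∃ L : Matrix (RowIdx n) (RowIdx n) ℂ,
      (∀ r : RowIdx n, L r r = 1) ∧
      (∀ r r' : RowIdx n, RowIdx.lt r r' → L r r' = 0) ∧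
      Mn = L * MnC ∧ Mn.rank = 2 * n + 1 ∧ MnC.rank = 2 * n + 1 := by
  set θ : Fin (2 * n + 1) → ℝ := fun l => 2 * Real.pi * (l : ℕ) / (2 * n + 1) with hθ
  let c : Fin (2 * n + 1) → ℂ := fun l => N * (Real.cos (θ l) : ℝ)
  let s : Fin (2 * n + 1) → ℂ := fun l => N * (Real.sin (θ l) : ℝ)
  have hc : ∀ l, lam l (1, 0) = c l := fun l => (hlam l).2.2.1
  have hs : ∀ l, lam l (0, 1) = s l := fun l => (hlam l).2.2.2.1
  have hK : ∀ l, c l * c l + s l * s l = N ^ 2 := by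
    intro l
    have h1 : ((Real.cos (θ l) : ℝ) : ℂ) ^ 2 + ((Real.sin (θ l) : ℝ) : ℂ) ^ 2 = 1 := by
      exact_mod_cast Real.cos_sq_add_sin_sq (θ l)
    simp only [c, s]
    linear_combination N ^ 2 * h1
  obtain ⟨R, hR, hP⟩ := gpwP_split (G := G) (by omega : 1 ≤ q) (fun l => (hlam l).2.1) hc hs
    (lam_mem (fun l => (hlam l).1) hc hs hK (fun l => (hlam l).2.2.2.2))
  have hPG : ∀ l, gpwP q G (lam l) G = 0 := by
    intro l
    rw [hP l]
    simp [lin, Vd_eval_neg (by norm_num) hR l]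
  have hC : ∀ r l, MnC r l = c l ^ (r.1.1 : ℕ) * s l ^ (r.1.2 : ℕ) /
      ((((r.1.1 : ℕ).factorial * (r.1.2 : ℕ).factorial : ℕ)) : ℂ) := by
    intro r l
    rw [hMnC]
    have e : (fun z : ℝ × ℝ => Complex.exp (N *
              (((z.1 - G.1 : ℝ) : ℂ) *
                  ((Real.cos (2 * Real.pi * (l : ℕ) / (2 * n + 1)) : ℝ) : ℂ)
                + ((z.2 - G.2 : ℝ) : ℂ) *
                  ((Real.sin (2 * Real.pi * (l : ℕ) / (2 * n + 1)) : ℝ) : ℂ)))) =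
        fun z => Complex.exp (lin G (c l) (s l) z) := by
      funext z
      congr 1
      simp only [lin, c, s, hθ]
      ring
    rw [e, lin_iter]
    simp [lin]
  have hfac : ∀ r : RowIdx n, ((((r.1.1 : ℕ).factorial * (r.1.2 : ℕ).factorial : ℕ)) : ℂ) ≠ 0 := by
    intro r
    exact_mod_cast Nat.mul_ne_zero (Nat.factorial_ne_zero _) (Nat.factorial_ne_zero _)
  -- lower order combinations
  have hcomb : ∀ (k : ℕ), k ≤ n → ∀ u ∈ Submodule.span ℂ
      {u : Fin (2 * n + 1) → ℂ | ∃ a b : ℕ, (a + b : ℤ) ≤ (k : ℤ) - 2 ∧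
        u = fun l => c l ^ a * s l ^ b},
      ∃ w : RowIdx n → ℂ, (∀ r', k ≤ (r'.1.1 : ℕ) + (r'.1.2 : ℕ) → w r' = 0) ∧
        ∀ l, u l = ∑ r', w r' * MnC r' l := by
    intro k hk u hu
    induction hu using Submodule.span_induction with
    | mem u h =>
      obtain ⟨a, b, h, rfl⟩ := h
      let r : RowIdx n := ⟨(⟨a, by omega⟩, ⟨b, by omega⟩), by
        show a + b ≤ n
        omega⟩
      refine ⟨Pi.single r (((a.factorial * b.factorial : ℕ)) : ℂ), ?_, ?_⟩
      · intro r' hr'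
        apply Pi.single_eq_of_ne
        rintro rfl
        change k ≤ a + b at hr'
        omega
      · intro l
        rw [Finset.sum_eq_single r]
        · rw [Pi.single_eq_same, hC]
          exact (mul_div_cancel₀ _ (hfac r)).symm
        · intro r' _ hr'
          rw [Pi.single_eq_of_ne hr', zero_mul]
        · intro h
          exact absurd (Finset.mem_univ _) h
    | zero => exact ⟨0, by simp, by simp⟩
    | add u u' _ _ hu hu' =>
      obtain ⟨w, h1, h2⟩ := hu
      obtain ⟨w', h1', h2'⟩ := hu'
      refine ⟨w + w', fun r hr => by simp [h1 r hr, h1' r hr], fun l => ?_⟩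
      simp [h2, h2', add_mul, Finset.sum_add_distrib]
    | smul x u _ hu =>
      obtain ⟨w, h1, h2⟩ := hu
      refine ⟨x • w, fun r hr => by simp [h1 r hr], fun l => ?_⟩
      simp [h2, mul_assoc, Finset.mul_sum]
  have hrow : ∀ r : RowIdx n, ∃ w : RowIdx n → ℂ,
      (∀ r' : RowIdx n, (r.1.1 : ℕ) + (r.1.2 : ℕ) ≤ (r'.1.1 : ℕ) + (r'.1.2 : ℕ) → w r' = 0) ∧
        ∀ l, Mn r l = MnC r l + ∑ r', w r' * MnC r' l := by
    intro r
    obtain ⟨A, hF, hA⟩ := Inv_iter hR hP (r.1.1 : ℕ) (r.1.2 : ℕ)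
    have hev := Vd_eval hA
    obtain ⟨w, h1, h2⟩ := hcomb ((r.1.1 : ℕ) + (r.1.2 : ℕ)) r.2 _ (by push_cast; exact hev)
    refine ⟨fun r' => w r' / ((((r.1.1 : ℕ).factorial * (r.1.2 : ℕ).factorial : ℕ)) : ℂ),
      fun r' hr' => by simp [h1 r' hr'], fun l => ?_⟩
    have h3 := congrFun (hF l) G
    simp only [Pi.mul_apply, hPG, Complex.exp_zero, mul_one] at h3
    have h4 := h2 l
    simp only [Pi.sub_apply] at h4
    rw [hMn, h3, hC r l, sub_eq_iff_eq_add.mp h4, add_div, add_comm, Finset.sum_div]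
    congr 1
    refine Finset.sum_congr rfl fun r' _ => ?_
    ring
  choose w hw1 hw2 using hrow
  have hLM : Mn = (1 + Matrix.of w) * MnC := by
    ext r l
    rw [Matrix.add_mul, Matrix.one_mul, Matrix.add_apply, Matrix.mul_apply, hw2]
    simp
  have hinjC : ∀ v, MnC.mulVec v = 0 → v = 0 := by
    intro v hv
    apply moments_zero n N hN v
    intro a b hab
    let r : RowIdx n := ⟨(⟨a, by omega⟩, ⟨b, by omega⟩), hab⟩
    have h := congrFun hv r
    simp only [Matrix.mulVec, dotProduct, hC, Pi.zero_apply] at h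
    have h2 : ((((r.1.1 : ℕ).factorial * (r.1.2 : ℕ).factorial : ℕ)) : ℂ) *
        (∑ l, c l ^ (r.1.1 : ℕ) * s l ^ (r.1.2 : ℕ) /
          ((((r.1.1 : ℕ).factorial * (r.1.2 : ℕ).factorial : ℕ)) : ℂ) * v l) = 0 := by
      rw [h, mul_zero]
    rw [← h2, Finset.mul_sum]
    refine Finset.sum_congr rfl fun l _ => ?_
    have h5 := hfac r
    have e : v l * (c l ^ (r.1.1 : ℕ) * s l ^ (r.1.2 : ℕ)) =
      ((((r.1.1 : ℕ).factorial * (r.1.2 : ℕ).factorial : ℕ)) : ℂ) *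
        (c l ^ (r.1.1 : ℕ) * s l ^ (r.1.2 : ℕ) /
          ((((r.1.1 : ℕ).factorial * (r.1.2 : ℕ).factorial : ℕ)) : ℂ) * v l) := by
      field_simp
    exact e
  have hinj : ∀ v, Mn.mulVec v = 0 → v = 0 := by
    intro v hv
    apply hinjC
    have key : ∀ k : ℕ, ∀ r : RowIdx n, (r.1.1 : ℕ) + (r.1.2 : ℕ) = k → MnC.mulVec v r = 0 := by
      intro k
      induction k using Nat.strong_induction_on with
      | _ k ih =>
      intro r hr
      have h := congrFun hv r
      rw [hLM, ← Matrix.mulVec_mulVec, Matrix.add_mulVec, Matrix.one_mulVec, Pi.add_apply] at h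
      have h0 : (Matrix.of w).mulVec (MnC.mulVec v) r = 0 := by
        refine Finset.sum_eq_zero fun r' _ => ?_
        by_cases hlt : (r.1.1 : ℕ) + (r.1.2 : ℕ) ≤ (r'.1.1 : ℕ) + (r'.1.2 : ℕ)
        · simp [hw1 r r' hlt]
        · rw [ih _ (by omega) r' rfl, mul_zero]
      rw [h0, add_zero] at h
      exact h
    funext r
    exact key _ r rfl
  refine ⟨1 + Matrix.of w, ?_, ?_, hLM, ?_, ?_⟩
  · intro r
    simp [hw1 r r le_rfl]
  · intro r r' hlt
    have hne : r ≠ r' := by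
      rintro rfl
      rcases hlt with h | h
      · exact lt_irrefl _ h
      · exact lt_irrefl _ h.2
    have hle : (r.1.1 : ℕ) + (r.1.2 : ℕ) ≤ (r'.1.1 : ℕ) + (r'.1.2 : ℕ) := by
      rcases hlt with h | h
      · exact h.le
      · exact h.1.le
    simp [Matrix.one_apply_ne hne, hw1 r r' hle]
  · rw [rank_of_inj Mn hinj, Fintype.card_fin]
  · rw [rank_of_inj MnC hinjC, Fintype.card_fin]
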